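/- There is no m₀-Luzin set: for every set L ⊆ ω^ω there exists a set A ∈ m₀ such that the cardinality of A ∩ L equals the cardinality of L. -/

import Mathlib

open Cardinal Set

/-- A tree on ω: a nonempty set of finite sequences closed under initial segments. -/
def IsTree (T : Set (List ℕ)) : Prop :=
  T.Nonempty ∧ ∀ s ∈ T, ∀ n : ℕ, s.take n ∈ T

/-- The body of a tree: all infinite branches. -/
def treeBody (T : Set (List ℕ)) : Set (ℕ → ℕ) :=
  {x | ∀ n : ℕ, (List.ofFn fun i : Fin n => x i) ∈ T}

/-- Immediate successors of a node in a tree. -/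
def succs (T : Set (List ℕ)) (t : List ℕ) : Set ℕ := {n | t ++ [n] ∈ T}

/-- Sacks (perfect) tree: every node has an extension with at least two immediate successors. -/
def IsSacksTree (T : Set (List ℕ)) : Prop :=
  IsTree T ∧ ∀ s ∈ T, ∃ t ∈ T, s <+: t ∧ (succs T t).Nontrivial

/-- Miller tree: every node has an extension with infinitely many immediate successors. -/
def IsMillerTree (T : Set (List ℕ)) : Prop :=
  IsTree T ∧ ∀ s ∈ T, ∃ t ∈ T, s <+: t ∧ (succs T t).Infinite

/-- Laver tree: has a stem (a node comparable with every node) such that every node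
extending the stem has infinitely many immediate successors. -/
def IsLaverTree (T : Set (List ℕ)) : Prop :=
  IsTree T ∧ ∃ s ∈ T, (∀ t ∈ T, s <+: t ∨ t <+: s) ∧
    ∀ t ∈ T, s <+: t → (succs T t).Infinite

/-- Complete Laver tree: every node has infinitely many immediate successors. -/
def IsCompleteLaverTree (T : Set (List ℕ)) : Prop :=
  IsTree T ∧ ∀ t ∈ T, (succs T t).Infinite

/-- The tree ideal t₀ associated with a family of trees 𝕋. -/
def treeIdeal (𝕋 : Set (Set (List ℕ))) : Set (Set (ℕ → ℕ)) :=
  {A | ∀ P ∈ 𝕋, ∃ Q ∈ 𝕋, Q ⊆ P ∧ treeBody Q ∩ A = ∅}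

/-- t-measurability with respect to a family of trees 𝕋. -/
def TMeasurable (𝕋 : Set (Set (List ℕ))) (A : Set (ℕ → ℕ)) : Prop :=
  ∀ P ∈ 𝕋, ∃ Q ∈ 𝕋, Q ⊆ P ∧ (treeBody Q ⊆ A ∨ treeBody Q ∩ A = ∅)

/-- 𝕋-Bernstein set: meets and omits the body of every tree in 𝕋. -/
def TBernstein (𝕋 : Set (Set (List ℕ))) (B : Set (ℕ → ℕ)) : Prop :=
  ∀ T ∈ 𝕋, (B ∩ treeBody T).Nonempty ∧ (B \ treeBody T).Nonempty

/-!
Below every Miller tree there are continuum many Miller trees whose bodies lie in different fibres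
of a continuous map to the Cantor space, hence are disjoint. On the other hand, every Miller tree
has a Miller subtree on which a given continuous map to a compact Hausdorff space is constant or
injective, so its body meets all but one of the fibres in at most one point.

If `L` is not in the ideal, then there is a Miller tree below which each of these disjoint bodies
contains continuum many points of `L`. A transfinite recursion of length `𝔠` over all Miller trees
selects one of these points in each body, avoiding the shrunken trees of the earlier stages except
those that are exceptional for this body. The selected points form a set of size `𝔠` that meets
each shrunken Miller tree in fewer than `𝔠` points, and sets of size less than `𝔠` belong to the
ideal since every Miller tree contains continuum many disjoint ones.
-/

open Filter Topology Function

section Transversal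

universe u

variable {α ι J : Type u}

lemma exists_mem_forall_notMem_of_mk_lt {X : Set α} {K : Set J} {Z : J → Set α} (hK : #K < #X)
    (hZ : ∀ j ∈ K, (Z j ∩ X).Subsingleton) : ∃ x ∈ X, ∀ j ∈ K, x ∉ Z j := by
  by_contra! hcover
  choose j hjK hjZ using hcover
  have hinj : Injective fun x : X => (⟨j x x.2, hjK x x.2⟩ : K) := fun x x' hxx' =>
    have hj : j x x.2 = j x' x'.2 := congrArg Subtype.val hxx'
    Subtype.ext (hZ _ (hjK x x.2) ⟨hjZ x x.2, x.2⟩ ⟨hj ▸ hjZ x' x'.2, x'.2⟩)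
  exact hK.not_ge (mk_le_of_injective hinj)

theorem exists_transversal_of_subsingleton_inter [Infinite ι] (hJ : #J ≤ #ι) {X : ι → Set α}
    {Z : J → Set α} {c : J → ι} (hX : ∀ i, #ι ≤ #(X i))
    (hZ : ∀ j i, i ≠ c j → (Z j ∩ X i).Subsingleton) :
    ∃ x : ι → α, (∀ i, x i ∈ X i) ∧ ∀ j, #{i | x i ∈ Z j} < #ι := by
  obtain ⟨_, _, hord⟩ := exists_ord_eq_type_lt ι
  obtain ⟨r⟩ := hJ
  have hstage : ∀ i, ∃ x ∈ X i, ∀ j ∈ {j | r j < i ∧ i ≠ c j}, x ∉ Z j := fun i => by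
    refine exists_mem_forall_notMem_of_mk_lt (lt_of_lt_of_le ?_ (hX i)) fun j hj => hZ j i hj.2
    have hmaps : MapsTo r {j | r j < i ∧ i ≠ c j} (Iio i) := fun j hj => hj.1
    exact (mk_le_of_injective (hmaps.restrict_inj.2 r.injective.injOn)).trans_lt (mk_Iio_lt i hord)
  choose x hxX hxZ using hstage
  refine ⟨x, hxX, fun j => ?_⟩
  have hsub : {i | x i ∈ Z j} ⊆ insert (c j) (Iic (r j)) := fun i hi => by
    by_contra hni
    rw [mem_insert_iff, mem_Iic, not_or, not_le] at hni
    exact hxZ i j ⟨hni.2, hni.1⟩ hi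
  calc #{i | x i ∈ Z j} ≤ #(insert (c j) (Iic (r j)) : Set ι) := mk_le_mk_of_subset hsub
    _ ≤ #(Iic (r j)) + 1 := mk_insert_le
    _ < #ι := add_one_lt_of_lt (aleph0_le_mk ι) (mk_Iic_lt (r j) hord (aleph0_le_mk ι))

end Transversal

lemma treeBody_mono {S T : Set (List ℕ)} (h : S ⊆ T) : treeBody S ⊆ treeBody T :=
  fun _ hx n => h (hx n)

section TreeIdeal

variable {𝕋 : Set (Set (List ℕ))}

/-- A family of trees has sparse splittings if below each of its members `P` there are continuum
many members `Q y` with disjoint bodies such that every member of the family can be shrunk to one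
whose body meets all but one of the bodies of the `Q y` in at most one point. The index set
`ℕ → Bool` is only a convenient set of size continuum. -/
def HasSparseSplittings (𝕋 : Set (Set (List ℕ))) : Prop :=
  ∀ P ∈ 𝕋, ∃ Q : (ℕ → Bool) → Set (List ℕ), (∀ y, Q y ∈ 𝕋 ∧ Q y ⊆ P) ∧
    Pairwise (Disjoint on fun y => treeBody (Q y)) ∧
    ∀ T ∈ 𝕋, ∃ R ∈ 𝕋, R ⊆ T ∧ ∃ y₀, ∀ y ≠ y₀, (treeBody R ∩ treeBody (Q y)).Subsingleton

lemma mk_nat_arrow_bool : #(ℕ → Bool) = 𝔠 := by simp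

lemma HasSparseSplittings.mem_treeIdeal_of_mk_lt (h𝕋 : HasSparseSplittings 𝕋)
    {B : Set (ℕ → ℕ)} (hB : #B < 𝔠) : B ∈ treeIdeal 𝕋 := by
  intro P hP
  obtain ⟨Q, hQ, hdisj, -⟩ := h𝕋 P hP
  by_contra! hmeet
  have hpoint : ∀ y, ∃ x ∈ B, x ∈ treeBody (Q y) := fun y =>
    let ⟨x, hxQ, hxB⟩ := hmeet (Q y) (hQ y).1 (hQ y).2
    ⟨x, hxB, hxQ⟩
  choose x hxB hxQ using hpoint
  have hinj : Injective x := fun y y' hyy' =>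
    hdisj.eq (not_disjoint_iff.2 ⟨x y, hxQ y, hyy' ▸ hxQ y'⟩)
  have hle : #(ℕ → Bool) ≤ #B := mk_le_of_injective (hinj.codRestrict hxB)
  exact hB.not_ge (mk_nat_arrow_bool ▸ hle)

lemma HasSparseSplittings.mem_treeIdeal_of_forall_exists_mk_lt (h𝕋 : HasSparseSplittings 𝕋)
    {A : Set (ℕ → ℕ)} (hA : ∀ T ∈ 𝕋, ∃ R ∈ 𝕋, R ⊆ T ∧ #↑(A ∩ treeBody R) < 𝔠) :
    A ∈ treeIdeal 𝕋 := by
  intro T hT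
  obtain ⟨R, hR, hRT, hsmall⟩ := hA T hT
  obtain ⟨W, hW, hWR, hWA⟩ := h𝕋.mem_treeIdeal_of_mk_lt hsmall R hR
  refine ⟨W, hW, hWR.trans hRT, ?_⟩
  rwa [inter_comm A, ← inter_assoc, inter_eq_left.2 (treeBody_mono hWR)] at hWA

lemma HasSparseSplittings.exists_forall_continuum_le_mk (h𝕋 : HasSparseSplittings 𝕋)
    {L : Set (ℕ → ℕ)} (hL : L ∉ treeIdeal 𝕋) :
    ∃ P ∈ 𝕋, ∀ Q ∈ 𝕋, Q ⊆ P → 𝔠 ≤ #↑(treeBody Q ∩ L) := by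
  obtain ⟨P, hP, hPL⟩ : ∃ P ∈ 𝕋, ∀ Q ∈ 𝕋, Q ⊆ P → treeBody Q ∩ L ≠ ∅ := by
    simpa [treeIdeal] using hL
  refine ⟨P, hP, fun Q hQ hQP => le_of_not_gt fun hlt => ?_⟩
  obtain ⟨R, hR, hRQ, hRL⟩ := h𝕋.mem_treeIdeal_of_mk_lt hlt Q hQ
  rw [← inter_assoc, inter_eq_left.2 (treeBody_mono hRQ)] at hRL
  exact hPL R hR (hRQ.trans hQP) hRL

theorem HasSparseSplittings.exists_subset_mk_eq_continuum (h𝕋 : HasSparseSplittings 𝕋)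
    {L : Set (ℕ → ℕ)} (hL : L ∉ treeIdeal 𝕋) : ∃ A ⊆ L, A ∈ treeIdeal 𝕋 ∧ #A = 𝔠 := by
  obtain ⟨P, hP, hPL⟩ := h𝕋.exists_forall_continuum_le_mk hL
  obtain ⟨Q, hQ, hdisj, hsparse⟩ := h𝕋 P hP
  choose! R hR hRT c hc using hsparse
  have h𝕋card : #𝕋 ≤ #(ℕ → Bool) := (mk_set_le 𝕋).trans (by simp)
  obtain ⟨x, hxX, hxR⟩ := exists_transversal_of_subsingleton_inter h𝕋card
    (X := fun y => treeBody (Q y) ∩ L) (Z := fun T : 𝕋 => treeBody (R T)) (c := fun T => c T)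
    (fun y => mk_nat_arrow_bool ▸ hPL (Q y) (hQ y).1 (hQ y).2)
    fun T y hy => (hc T T.2 y hy).anti (inter_subset_inter_right _ inter_subset_left)
  have hinj : Injective x := fun y y' hyy' =>
    hdisj.eq (not_disjoint_iff.2 ⟨x y, (hxX y).1, hyy' ▸ (hxX y').1⟩)
  refine ⟨range x, range_subset_iff.2 fun y => (hxX y).2,
    h𝕋.mem_treeIdeal_of_forall_exists_mk_lt fun T hT => ⟨R T, hR T hT, hRT T hT, ?_⟩,
    (mk_range_eq x hinj).trans mk_nat_arrow_bool⟩
  rw [inter_comm, ← image_preimage_eq_inter_range]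
  exact mk_image_le.trans_lt (mk_nat_arrow_bool ▸ hxR ⟨T, hT⟩)

end TreeIdeal

section Cylinder

variable {x x' : ℕ → ℕ} {s t : List ℕ} {m n : ℕ}

/-- The initial segment of `x` of length `n`, in the form in which `treeBody` refers to it. -/
def initSeg (x : ℕ → ℕ) (n : ℕ) : List ℕ := List.ofFn fun i : Fin n => x i

/-- The basic clopen set of all sequences that extend `s`. Unlike `PiNat.cylinder`, it is indexed by
finite sequences, the nodes of trees. -/
def cylinder (s : List ℕ) : Set (ℕ → ℕ) := {x | initSeg x s.length = s}

@[simp]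
lemma length_initSeg (x : ℕ → ℕ) (n : ℕ) : (initSeg x n).length = n := by simp [initSeg]

@[simp]
lemma initSeg_zero (x : ℕ → ℕ) : initSeg x 0 = [] := by simp [initSeg]

lemma initSeg_succ (x : ℕ → ℕ) (n : ℕ) : initSeg x (n + 1) = initSeg x n ++ [x n] :=
  List.ofFn_succ_last

lemma initSeg_eq_initSeg_iff : initSeg x n = initSeg x' n ↔ ∀ i < n, x i = x' i := by
  simp [initSeg, funext_iff, Fin.forall_iff]

lemma initSeg_prefix_initSeg (x : ℕ → ℕ) (h : m ≤ n) : initSeg x m <+: initSeg x n := by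
  induction n, h using Nat.le_induction with
  | base => exact List.prefix_rfl
  | succ n _ ih => exact initSeg_succ x n ▸ ih.trans (List.prefix_append _ _)

lemma mem_cylinder_initSeg (x : ℕ → ℕ) (n : ℕ) : x ∈ cylinder (initSeg x n) := by
  simp [cylinder]

lemma mem_cylinder_iff_prefix (hn : s.length ≤ n) : x ∈ cylinder s ↔ s <+: initSeg x n := by
  have hseg := initSeg_prefix_initSeg x hn
  refine ⟨fun hx => hx ▸ hseg, fun hs => ?_⟩
  exact (List.prefix_of_prefix_length_le hseg hs (by simp)).eq_of_length (by simp)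

lemma mem_cylinder_of_prefix (hx : initSeg x n <+: t) (hs : s <+: t) (hn : s.length ≤ n) :
    x ∈ cylinder s :=
  (mem_cylinder_iff_prefix hn).2 (List.prefix_of_prefix_length_le hs hx (by simpa using hn))

lemma cylinder_anti (h : s <+: t) : cylinder t ⊆ cylinder s :=
  fun _ hx => mem_cylinder_of_prefix List.prefix_rfl (hx.symm ▸ h) h.length_le

lemma prefix_of_mem_cylinder (hs : x ∈ cylinder s) (ht : x ∈ cylinder t)
    (h : s.length ≤ t.length) : s <+: t := by
  simpa only [show initSeg x t.length = t from ht] using (mem_cylinder_iff_prefix h).1 hs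

lemma cylinder_initSeg (x : ℕ → ℕ) (n : ℕ) : cylinder (initSeg x n) = PiNat.cylinder x n := by
  ext x'
  simp [cylinder, initSeg_eq_initSeg_iff, PiNat.mem_cylinder_iff]

lemma cylinder_mem_nhds (hx : x ∈ cylinder s) : cylinder s ∈ 𝓝 x := by
  rw [show s = initSeg x s.length from hx.symm, cylinder_initSeg]
  exact (PiNat.isOpen_cylinder _ x _).mem_nhds (PiNat.self_mem_cylinder x _)

lemma exists_cylinder_initSeg_subset {U : Set (ℕ → ℕ)} (hU : U ∈ 𝓝 x) :
    ∃ n, cylinder (initSeg x n) ⊆ U := by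
  obtain ⟨_, ⟨x', n, rfl⟩, hx, hsub⟩ :=
    (PiNat.isTopologicalBasis_cylinders fun _ => ℕ).mem_nhds_iff.1 hU
  exact ⟨n, cylinder_initSeg x n ▸ PiNat.mem_cylinder_iff_eq.1 hx ▸ hsub⟩

lemma exists_forall_initSeg {p : List ℕ → Prop} (h₀ : p [])
    (hsucc : ∀ s, p s → ∃ n, p (s ++ [n])) : ∃ x, ∀ n, p (initSeg x n) := by
  choose! next hnext using hsucc
  let node : ℕ → List ℕ := Nat.rec [] fun _ s => s ++ [next s]
  have hnode : ∀ n, initSeg (fun k => next (node k)) n = node n := fun n => by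
    induction n with
    | zero => exact initSeg_zero _
    | succ n ih => rw [initSeg_succ, ih]
  refine ⟨fun k => next (node k), fun n => hnode n ▸ ?_⟩
  induction n with
  | zero => exact h₀
  | succ n ih => exact hnext _ ih

lemma IsTree.mem_of_prefix {T : Set (List ℕ)} (hT : IsTree T) (h : s <+: t) (ht : t ∈ T) :
    s ∈ T :=
  List.prefix_iff_eq_take.1 h ▸ hT.2 t ht s.length

lemma mem_of_mem_treeBody {T : Set (List ℕ)} (hx : x ∈ treeBody T) (hs : x ∈ cylinder s) :
    s ∈ T :=
  (show initSeg x s.length = s from hs) ▸ hx s.length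

end Cylinder

section Scheme

variable {T M : Set (List ℕ)} {e : List ℕ → List ℕ} {s s' : List ℕ} {x x' : ℕ → ℕ}

/-- A fan over `t`: nodes `f n` extending `t` that pairwise differ immediately after `t`. -/
def IsFan (t : List ℕ) (f : ℕ → List ℕ) : Prop :=
  ∃ a : ℕ → ℕ, Injective a ∧ ∀ n, t ++ [a n] <+: f n

/-- A copy `e` of the full tree on ω inside a tree: the images of the immediate successors of `s`
form a fan over the image of `s`. The downward closure of the image is a Miller tree whose
branches correspond to the points of the Baire space. -/
def IsMillerScheme (e : List ℕ → List ℕ) : Prop := ∀ s, IsFan (e s) fun n => e (s ++ [n])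

/-- The tree generated by the image under `e` of a tree `M`. -/
def imageTree (e : List ℕ → List ℕ) (M : Set (List ℕ)) : Set (List ℕ) := {t | ∃ s ∈ M, t <+: e s}

lemma imageTree_mono (e : List ℕ → List ℕ) {M M' : Set (List ℕ)} (h : M ⊆ M') :
    imageTree e M ⊆ imageTree e M' :=
  fun _ ⟨s, hs, hts⟩ => ⟨s, h hs, hts⟩

lemma IsTree.imageTree_subset (hT : IsTree T) (he : ∀ s, e s ∈ T) (M : Set (List ℕ)) :
    imageTree e M ⊆ T :=
  fun _ ⟨s, _, hts⟩ => hT.mem_of_prefix hts (he s)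

lemma isTree_imageTree (e : List ℕ → List ℕ) (hM : M.Nonempty) : IsTree (imageTree e M) :=
  ⟨hM.elim fun s hs => ⟨e s, s, hs, List.prefix_rfl⟩,
    fun _ ⟨s, hs, hts⟩ _ => ⟨s, hs, (List.take_prefix _ _).trans hts⟩⟩

namespace IsMillerScheme

lemma prefix_append_singleton (he : IsMillerScheme e) (s : List ℕ) (n : ℕ) :
    e s <+: e (s ++ [n]) :=
  let ⟨_, _, ha⟩ := he s
  (List.prefix_append _ _).trans (ha n)

lemma length_lt_append_singleton (he : IsMillerScheme e) (s : List ℕ) (n : ℕ) :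
    (e s).length < (e (s ++ [n])).length := by
  obtain ⟨a, -, ha⟩ := he s
  simpa using (ha n).length_le

lemma mono (he : IsMillerScheme e) (h : s <+: s') : e s <+: e s' := by
  obtain ⟨r, rfl⟩ := h
  induction r using List.reverseRecOn with
  | nil => simp
  | append_singleton r n ih =>
    exact List.append_assoc s r [n] ▸ ih.trans (he.prefix_append_singleton _ n)

lemma length_le (he : IsMillerScheme e) (s : List ℕ) : s.length ≤ (e s).length := by
  induction s using List.reverseRecOn with
  | nil => simp
  | append_singleton s n ih => simpa using ih.trans_lt (he.length_lt_append_singleton s n)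

lemma prefix_of_prefix (he : IsMillerScheme e) (h : e s <+: e s') : s <+: s' := by
  induction s using List.reverseRecOn with
  | nil => exact List.nil_prefix
  | append_singleton r n ih =>
    obtain ⟨q, rfl⟩ := ih ((he.prefix_append_singleton r n).trans h)
    cases q with
    | nil =>
      rw [List.append_nil] at h
      exact absurd h.length_le (he.length_lt_append_singleton r n).not_ge
    | cons m q =>
      obtain ⟨a, hinj, ha⟩ := he r
      have hrm : r ++ [m] <+: r ++ m :: q := ⟨q, by simp⟩
      have hn : e r ++ [a n] <+: e (r ++ m :: q) := (ha n).trans h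
      have hm : e r ++ [a m] <+: e (r ++ m :: q) := (ha m).trans (he.mono hrm)
      have hnm : e r ++ [a n] = e r ++ [a m] :=
        (List.prefix_of_prefix_length_le hn hm (by simp)).eq_of_length (by simp)
      obtain rfl : n = m := hinj (by simpa using hnm)
      exact hrm

lemma eq_of_mem_cylinder (he : IsMillerScheme e) (hlen : s.length = s'.length)
    (hs : x ∈ cylinder (e s)) (hs' : x ∈ cylinder (e s')) : s = s' := by
  rcases le_total (e s).length (e s').length with h | h
  · exact (he.prefix_of_prefix (prefix_of_mem_cylinder hs hs' h)).eq_of_length hlen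
  · exact ((he.prefix_of_prefix (prefix_of_mem_cylinder hs' hs h)).eq_of_length hlen.symm).symm

lemma isMillerTree_imageTree (he : IsMillerScheme e) (hM : IsMillerTree M) :
    IsMillerTree (imageTree e M) := by
  refine ⟨isTree_imageTree e hM.1.1, fun t ⟨s, hs, hts⟩ => ?_⟩
  obtain ⟨s', hs', hss', hinf⟩ := hM.2 s hs
  obtain ⟨a, hinj, ha⟩ := he s'
  refine ⟨e s', ⟨s', hs', List.prefix_rfl⟩, hts.trans (he.mono hss'),
    (hinf.image hinj.injOn).mono ?_⟩
  rintro _ ⟨n, hn, rfl⟩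
  exact ⟨s' ++ [n], hn, ha n⟩

lemma mem_of_mem_cylinder (he : IsMillerScheme e) (hM : IsTree M)
    (hx : x ∈ treeBody (imageTree e M)) (hs : x ∈ cylinder (e s)) : s ∈ M := by
  obtain ⟨s', hs', hpre⟩ := mem_of_mem_treeBody hx hs
  exact hM.mem_of_prefix (he.prefix_of_prefix hpre) hs'

lemma exists_append_singleton_prefix (he : IsMillerScheme e)
    (hx : x ∈ treeBody (imageTree e univ)) (hs : x ∈ cylinder (e s)) {N : ℕ}
    (hN : (e s).length < N) : ∃ n s', s ++ [n] <+: s' ∧ initSeg x N <+: e s' := by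
  obtain ⟨s', -, hs'⟩ := hx N
  obtain ⟨q, rfl⟩ := he.prefix_of_prefix (((mem_cylinder_iff_prefix hN.le).1 hs).trans hs')
  cases q with
  | nil =>
    rw [List.append_nil] at hs'
    exact absurd hs'.length_le (by simpa using hN)
  | cons n q => exact ⟨n, _, ⟨q, by simp⟩, hs'⟩

/- The immediate successor of `e s` on `x` determines `n`, and then arbitrarily long initial
segments of `x` are comparable with `e (s ++ [n])`. -/
lemma exists_mem_cylinder_append_singleton (he : IsMillerScheme e)
    (hx : x ∈ treeBody (imageTree e univ)) (hs : x ∈ cylinder (e s)) :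
    ∃ n, x ∈ cylinder (e (s ++ [n])) := by
  obtain ⟨a, hinj, ha⟩ := he s
  have hnext : ∀ N > (e s).length, ∃ n s', s ++ [n] <+: s' ∧ initSeg x N <+: e s' ∧
      x ∈ cylinder (e s ++ [a n]) := fun N hN => by
    obtain ⟨n, s', hns', hs'⟩ := he.exists_append_singleton_prefix hx hs hN
    exact ⟨n, s', hns', hs',
      mem_cylinder_of_prefix hs' ((ha n).trans (he.mono hns')) (by simpa using hN)⟩
  obtain ⟨n, _, -, -, hn⟩ := hnext _ (Nat.lt_succ_self _)
  obtain ⟨m, s', hms', hs', hm⟩ := hnext _ (he.length_lt_append_singleton s n)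
  have hnm : e s ++ [a n] = e s ++ [a m] :=
    (prefix_of_mem_cylinder hn hm (by simp)).eq_of_length (by simp)
  obtain rfl : n = m := hinj (by simpa using hnm)
  exact ⟨n, mem_cylinder_of_prefix hs' (he.mono hms') le_rfl⟩

lemma mem_cylinder_nil (he : IsMillerScheme e) (hx : x ∈ treeBody (imageTree e M)) :
    x ∈ cylinder (e []) := by
  obtain ⟨s, -, hs⟩ := hx (e []).length
  exact mem_cylinder_of_prefix hs (he.mono List.nil_prefix) le_rfl

end IsMillerScheme

/-- The inverse of the map from the Baire space to the branches of a Miller scheme `e`: the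
sequence `z` such that `x` passes through all the nodes `e (initSeg z n)`. It is a junk value if
there is no such sequence. -/
noncomputable def decode (e : List ℕ → List ℕ) (x : ℕ → ℕ) : ℕ → ℕ :=
  Classical.epsilon fun z => ∀ n, x ∈ cylinder (e (initSeg z n))

namespace IsMillerScheme

lemma mem_cylinder_decode (he : IsMillerScheme e) (hx : x ∈ treeBody (imageTree e univ)) (n : ℕ) :
    x ∈ cylinder (e (initSeg (decode e x) n)) :=
  Classical.epsilon_spec (exists_forall_initSeg (p := fun s => x ∈ cylinder (e s))
    (he.mem_cylinder_nil hx) fun _ => he.exists_mem_cylinder_append_singleton hx) n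

lemma decode_mem_treeBody (he : IsMillerScheme e) (hM : IsTree M)
    (hx : x ∈ treeBody (imageTree e M)) : decode e x ∈ treeBody M := fun n =>
  he.mem_of_mem_cylinder hM hx
    (he.mem_cylinder_decode (treeBody_mono (imageTree_mono e (subset_univ M)) hx) n)

lemma injOn_decode (he : IsMillerScheme e) : InjOn (decode e) (treeBody (imageTree e univ)) := by
  intro x hx x' hx' heq
  funext i
  have hlen := he.length_le (initSeg (decode e x) (i + 1))
  have hxe := he.mem_cylinder_decode hx (i + 1)
  have hxe' := heq ▸ he.mem_cylinder_decode hx' (i + 1)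
  rw [length_initSeg] at hlen
  exact initSeg_eq_initSeg_iff.1 (hxe.trans hxe'.symm) i hlen

lemma continuousOn_decode (he : IsMillerScheme e) :
    ContinuousOn (decode e) (treeBody (imageTree e univ)) := by
  intro x hx U hU
  obtain ⟨n, hn⟩ := exists_cylinder_initSeg_subset hU
  rw [Filter.mem_map]
  filter_upwards [inter_mem_nhdsWithin _ (cylinder_mem_nhds (he.mem_cylinder_decode hx n))]
    with x' ⟨hx', hx'n⟩
  have hseg := he.eq_of_mem_cylinder (by simp) (he.mem_cylinder_decode hx' n) hx'n
  exact hn (hseg ▸ mem_cylinder_initSeg (decode e x') n)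

lemma exists_ne_mem_cylinder (he : IsMillerScheme e) (hx : x ∈ treeBody (imageTree e univ))
    (hx' : x' ∈ treeBody (imageTree e univ)) (hne : x ≠ x') :
    ∃ s n m, n ≠ m ∧ x ∈ cylinder (e (s ++ [n])) ∧ x' ∈ cylinder (e (s ++ [m])) := by
  have hdecode : decode e x ≠ decode e x' := fun heq => hne (he.injOn_decode hx hx' heq)
  let k := PiNat.firstDiff (decode e x) (decode e x')
  have hseg : initSeg (decode e x) k = initSeg (decode e x') k :=
    initSeg_eq_initSeg_iff.2 fun _ => PiNat.apply_eq_of_lt_firstDiff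
  refine ⟨initSeg (decode e x) k, decode e x k, decode e x' k,
    PiNat.apply_firstDiff_ne hdecode, ?_, ?_⟩
  · exact initSeg_succ (decode e x) k ▸ he.mem_cylinder_decode hx (k + 1)
  · exact hseg ▸ initSeg_succ (decode e x') k ▸ he.mem_cylinder_decode hx' (k + 1)

end IsMillerScheme

end Scheme

section MillerTree

variable {T : Set (List ℕ)} {s t : List ℕ}

/-- The infinitely splitting nodes of a tree. -/
def splitNodes (T : Set (List ℕ)) : Set (List ℕ) := {t ∈ T | (succs T t).Infinite}

lemma IsMillerTree.exists_splitNode (hT : IsMillerTree T) (hs : s ∈ T) :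
    ∃ t ∈ splitNodes T, s <+: t :=
  let ⟨t, ht, hst, hinf⟩ := hT.2 s hs
  ⟨t, ⟨ht, hinf⟩, hst⟩

lemma exists_forall_append_singleton {α β : Type*} {S : Set α} {G : α → (β → α) → Prop}
    (hG : ∀ t ∈ S, ∃ f, (∀ b, f b ∈ S) ∧ G t f) {r : α} (hr : r ∈ S) :
    ∃ e : List β → α, e [] = r ∧ (∀ s, e s ∈ S) ∧ ∀ s, G (e s) fun b => e (s ++ [b]) := by
  have : Nonempty (β → α) := ⟨fun _ => r⟩
  choose! f hfS hf using hG
  have hS : ∀ s : List β, s.foldl f r ∈ S := fun s => by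
    induction s using List.reverseRecOn with
    | nil => exact hr
    | append_singleton s b ih => simpa using hfS _ ih b
  exact ⟨fun s => s.foldl f r, rfl, hS, fun s => by simpa using hf _ (hS s)⟩

lemma IsMillerTree.exists_fan (hT : IsMillerTree T) (ht : t ∈ splitNodes T) :
    ∃ f, (∀ n, f n ∈ splitNodes T) ∧ IsFan t f := by
  let a := ht.2.natEmbedding
  choose f hfT hf using fun n => hT.exists_splitNode (a n).2
  exact ⟨f, hfT, fun n => a n, Subtype.val_injective.comp a.injective, hf⟩

lemma IsMillerTree.exists_scheme (hT : IsMillerTree T) (hs : s ∈ T) :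
    ∃ e, IsMillerScheme e ∧ (∀ r, e r ∈ T) ∧ s <+: e [] := by
  obtain ⟨t, ht, hst⟩ := hT.exists_splitNode hs
  obtain ⟨e, rfl, heT, he⟩ := exists_forall_append_singleton (fun _ => hT.exists_fan) ht
  exact ⟨e, he, fun r => (heT r).1, hst⟩

lemma IsCompleteLaverTree.isMillerTree (hT : IsCompleteLaverTree T) : IsMillerTree T :=
  ⟨hT.1, fun s hs => ⟨s, hs, List.prefix_rfl, hT.2 s hs⟩⟩

lemma isMillerTree_univ : IsMillerTree univ :=
  IsCompleteLaverTree.isMillerTree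
    ⟨⟨univ_nonempty, fun _ _ _ => mem_univ _⟩, fun _ _ => infinite_univ⟩

lemma IsMillerTree.exists_subset_treeBody_subset_cylinder (hT : IsMillerTree T) (hs : s ∈ T) :
    ∃ R ⊆ T, IsMillerTree R ∧ treeBody R ⊆ cylinder s := by
  obtain ⟨e, he, heT, hse⟩ := hT.exists_scheme hs
  exact ⟨imageTree e univ, hT.1.imageTree_subset heT _, he.isMillerTree_imageTree isMillerTree_univ,
    fun x hx => cylinder_anti hse (he.mem_cylinder_nil hx)⟩

end MillerTree

section ConstantOrInjective

variable {T : Set (List ℕ)} {s t : List ℕ} {Y : Type*} [TopologicalSpace Y] {h : (ℕ → ℕ) → Y}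

lemma exists_forall_nhds_infinite {ι : Type*} [CompactSpace Y] {S : Set ι} (hS : S.Infinite)
    (w : ι → Y) : ∃ z, ∀ V ∈ 𝓝 z, {i ∈ S | w i ∈ V}.Infinite := by
  have := hS.cofinite_inf_principal_neBot
  obtain ⟨z, hz⟩ := exists_clusterPt_of_compactSpace (map w (cofinite ⊓ 𝓟 S))
  refine ⟨z, fun V hV => frequently_cofinite_iff_infinite.1 ?_⟩
  exact frequently_inf_principal.1 (mapClusterPt_iff_frequently.1 hz V hV)

lemma exists_prefix_image_subset (hc : ContinuousOn h (treeBody T)) {x : ℕ → ℕ}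
    (hx : x ∈ treeBody T) (hxs : x ∈ cylinder s) {V : Set Y} (hV : V ∈ 𝓝 (h x)) :
    ∃ u ∈ T, s <+: u ∧ h '' (treeBody T ∩ cylinder u) ⊆ V := by
  obtain ⟨U, hU, hUV⟩ := mem_nhdsWithin_iff_exists_mem_nhds_inter.1 (hc x hx hV)
  obtain ⟨n, hn⟩ := exists_cylinder_initSeg_subset hU
  refine ⟨initSeg x (max s.length n), hx _, (mem_cylinder_iff_prefix (le_max_left _ _)).1 hxs, ?_⟩
  rintro _ ⟨x', ⟨hx', hx'n⟩, rfl⟩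
  exact hUV ⟨hn (cylinder_anti (initSeg_prefix_initSeg x (le_max_right _ _)) hx'n), hx'⟩

lemma exists_splitNode_image_subset [T2Space Y] (hT : IsMillerTree T)
    (hc : ContinuousOn h (treeBody T))
    (hne : ∀ s ∈ T, (h '' (treeBody T ∩ cylinder s)).Nontrivial) {x : ℕ → ℕ}
    (hx : x ∈ treeBody T) (hxs : x ∈ cylinder s) {V : Set Y} (hV : V ∈ 𝓝 (h x)) (z : Y) :
    ∃ u ∈ splitNodes T, s <+: u ∧ h '' (treeBody T ∩ cylinder u) ⊆ V ∧
      (h '' (treeBody T ∩ cylinder u))ᶜ ∈ 𝓝 z := by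
  obtain ⟨r, hr, hsr, hrV⟩ := exists_prefix_image_subset hc hx hxs hV
  obtain ⟨_, ⟨v, ⟨hv, hvr⟩, rfl⟩, hvz⟩ := (hne r hr).exists_ne z
  obtain ⟨O, O', hO, hO', hdisj⟩ := t2_separation_nhds hvz
  obtain ⟨q, hq, hrq, hqO⟩ := exists_prefix_image_subset hc hv hvr hO
  obtain ⟨u, hu, hqu⟩ := hT.exists_splitNode hq
  have himage {p : List ℕ} (hp : p <+: u) :
      h '' (treeBody T ∩ cylinder u) ⊆ h '' (treeBody T ∩ cylinder p) :=
    image_mono (inter_subset_inter_right _ (cylinder_anti hp))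
  exact ⟨u, hu, hsr.trans (hrq.trans hqu), (himage (hrq.trans hqu)).trans hrV,
    mem_of_superset hO' (hdisj.mono_left ((himage hqu).trans hqO)).subset_compl_left⟩

/- The nodes of the fan are chosen so that the images of their cylinders stay away from a cluster
point `z` of the images of the successors of `t`; this leaves room for the image of the next one
in a neighbourhood of `z`. -/
lemma exists_fan_disjoint_images [CompactSpace Y] [T2Space Y] (hT : IsMillerTree T)
    (hc : ContinuousOn h (treeBody T))
    (hne : ∀ s ∈ T, (h '' (treeBody T ∩ cylinder s)).Nontrivial) (ht : t ∈ splitNodes T) :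
    ∃ f, (∀ n, f n ∈ splitNodes T) ∧ IsFan t f ∧
      Pairwise (Disjoint on fun n => h '' (treeBody T ∩ cylinder (f n))) := by
  let image (u : List ℕ) : Set Y := h '' (treeBody T ∩ cylinder u)
  have hbranch : ∀ n ∈ succs T t, ∃ x ∈ treeBody T, x ∈ cylinder (t ++ [n]) := fun n hn =>
    (hne _ hn).nonempty.of_image
  choose! w hwT hwt using hbranch
  obtain ⟨z, hz⟩ := exists_forall_nhds_infinite ht.2 (h ∘ w)
  let r (p q : ℕ × List ℕ) : Prop := p.1 ≠ q.1 ∧ Disjoint (image p.2) (image q.2)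
  have : Std.Symm r := ⟨fun _ _ hpq => ⟨hpq.1.symm, hpq.2.symm⟩⟩
  obtain ⟨g, hg, hgr⟩ := exists_seq_of_forall_finset_exists'
    (fun p : ℕ × List ℕ => p.2 ∈ splitNodes T ∧ t ++ [p.1] <+: p.2 ∧ (image p.2)ᶜ ∈ 𝓝 z) r
    fun F hF => by
      let V := interior (⋂ p ∈ F, (image p.2)ᶜ)
      have hV : V ∈ 𝓝 z := interior_mem_nhds.2 ((biInter_finset_mem F).2 fun p hp => (hF p hp).2.2)
      obtain ⟨n, ⟨hn, hnV⟩, hnF⟩ := (hz V hV).exists_notMem_finset (F.image Prod.fst)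
      obtain ⟨u, hu, hnu, huV, huz⟩ := exists_splitNode_image_subset hT hc hne (hwT n hn)
        (hwt n hn) (isOpen_interior.mem_nhds hnV) z
      refine ⟨(n, u), ⟨hu, hnu, huz⟩, fun p hp => ⟨?_, ?_⟩⟩
      · rintro rfl
        exact hnF (Finset.mem_image_of_mem _ hp)
      · exact (subset_compl_iff_disjoint_left.1
          ((huV.trans interior_subset).trans (biInter_subset_of_mem hp)))
  refine ⟨fun n => (g n).2, fun n => (hg n).1, ⟨fun n => (g n).1, ?_, fun n => (hg n).2.1⟩,
    fun n m hnm => (hgr hnm).2⟩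
  exact fun n m hnm => by_contra fun hne => (hgr hne).1 hnm

theorem IsMillerTree.exists_subset_subsingleton_image_or_injOn [CompactSpace Y] [T2Space Y]
    (hT : IsMillerTree T) (hc : ContinuousOn h (treeBody T)) :
    ∃ R ⊆ T, IsMillerTree R ∧ ((h '' treeBody R).Subsingleton ∨ InjOn h (treeBody R)) := by
  by_cases hne : ∀ s ∈ T, (h '' (treeBody T ∩ cylinder s)).Nontrivial
  · obtain ⟨t, ht, -⟩ := hT.exists_splitNode hT.1.1.some_mem
    obtain ⟨e, -, heT, hfan⟩ := exists_forall_append_singleton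
      (fun _ => exists_fan_disjoint_images hT hc hne) ht
    have he : IsMillerScheme e := fun s => (hfan s).1
    have hsub : imageTree e univ ⊆ T := hT.1.imageTree_subset (fun s => (heT s).1) univ
    refine ⟨imageTree e univ, hsub, he.isMillerTree_imageTree isMillerTree_univ, Or.inr ?_⟩
    intro x hx x' hx' heq
    by_contra hxx'
    obtain ⟨s, n, m, hnm, hxn, hxm⟩ := he.exists_ne_mem_cylinder hx hx' hxx'
    exact disjoint_left.1 ((hfan s).2 hnm) ⟨x, ⟨treeBody_mono hsub hx, hxn⟩, rfl⟩
      ⟨x', ⟨treeBody_mono hsub hx', hxm⟩, heq.symm⟩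
  · push Not at hne
    obtain ⟨s, hs, hconst⟩ := hne
    obtain ⟨R, hRT, hR, hRs⟩ := hT.exists_subset_treeBody_subset_cylinder hs
    exact ⟨R, hRT, hR, Or.inl (hconst.anti
      (image_mono (subset_inter (treeBody_mono hRT) hRs)))⟩

end ConstantOrInjective

section SparseSplitting

/-- The tree whose branches are the `z` with `Nat.bodd ∘ z = y`. -/
def parityTree (y : ℕ → Bool) : Set (List ℕ) :=
  {s | ∀ i (hi : i < s.length), s[i].bodd = y i}

lemma isCompleteLaverTree_parityTree (y : ℕ → Bool) : IsCompleteLaverTree (parityTree y) := by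
  refine ⟨⟨⟨[], by simp [parityTree]⟩, fun s hs n i hi => ?_⟩, fun s hs => ?_⟩
  · rw [List.getElem_take]
    exact hs i _
  · have hinj : Injective (Nat.bit (y s.length)) := fun n m hnm => by
      simpa only [Nat.div2_bit] using congrArg Nat.div2 hnm
    refine (infinite_range_of_injective hinj).mono ?_
    rintro _ ⟨n, rfl⟩ i hi
    rcases (Nat.lt_succ_iff_lt_or_eq.1 (by simpa using hi) : i < s.length ∨ i = s.length) with
      hi' | rfl
    · rw [List.getElem_append_left hi']
      exact hs i hi'
    · simp

lemma bodd_comp_eq_of_mem_treeBody_parityTree {y : ℕ → Bool} {z : ℕ → ℕ}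
    (hz : z ∈ treeBody (parityTree y)) : Nat.bodd ∘ z = y := by
  funext i
  have hi := hz (i + 1) i (by simp)
  rwa [List.getElem_ofFn] at hi

lemma IsMillerTree.exists_continuousOn_forall_subset_fiber {P : Set (List ℕ)}
    (hP : IsMillerTree P) :
    ∃ (P' : Set (List ℕ)) (h : (ℕ → ℕ) → ℕ → Bool) (Q : (ℕ → Bool) → Set (List ℕ)),
      ContinuousOn h (treeBody P') ∧
      ∀ y, IsMillerTree (Q y) ∧ Q y ⊆ P ∧ Q y ⊆ P' ∧ ∀ x ∈ treeBody (Q y), h x = y := by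
  obtain ⟨e, he, heP, -⟩ := hP.exists_scheme hP.1.1.some_mem
  have hparity : Continuous fun z : ℕ → ℕ => Nat.bodd ∘ z := by fun_prop
  refine ⟨imageTree e univ, fun x => Nat.bodd ∘ decode e x, fun y => imageTree e (parityTree y),
    hparity.comp_continuousOn he.continuousOn_decode, fun y => ?_⟩
  have hM := isCompleteLaverTree_parityTree y
  exact ⟨he.isMillerTree_imageTree hM.isMillerTree, hP.1.imageTree_subset heP _,
    imageTree_mono e (subset_univ _), fun x hx =>
      bodd_comp_eq_of_mem_treeBody_parityTree (he.decode_mem_treeBody hM.1 hx)⟩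

theorem hasSparseSplittings_isMillerTree : HasSparseSplittings {T | IsMillerTree T} := by
  intro P hP
  obtain ⟨P', h, Q, hc, hQ⟩ := IsMillerTree.exists_continuousOn_forall_subset_fiber hP
  choose hQ hQP hQP' hQh using hQ
  refine ⟨Q, fun y => ⟨hQ y, hQP y⟩, fun y y' hyy' => ?_, fun T hT => ?_⟩
  · exact disjoint_left.2 fun x hx hx' => hyy' ((hQh y x hx).symm.trans (hQh y' x hx'))
  by_cases hTP' : T ⊆ P'
  · obtain ⟨R, hRT, hR, hconst | hinj⟩ :=
      IsMillerTree.exists_subset_subsingleton_image_or_injOn hT (hc.mono (treeBody_mono hTP'))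
    · obtain ⟨y₀, hy₀⟩ : ∃ y₀, h '' treeBody R ⊆ {y₀} :=
        hconst.eq_empty_or_singleton.elim (fun hempty => ⟨fun _ => true, by simp [hempty]⟩)
          fun ⟨y₀, hy₀⟩ => ⟨y₀, hy₀.subset⟩
      refine ⟨R, hR, hRT, y₀, fun y hy x hx => absurd ?_ hy⟩
      exact (hQh y x hx.2).symm.trans (hy₀ ⟨x, hx.1, rfl⟩)
    · refine ⟨R, hR, hRT, fun _ => true, fun y _ x hx x' hx' => hinj hx.1 hx'.1 ?_⟩
      rw [hQh y x hx.2, hQh y x' hx'.2]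
  · obtain ⟨s, hsT, hsP'⟩ := not_subset.1 hTP'
    obtain ⟨R, hRT, hR, hRs⟩ := IsMillerTree.exists_subset_treeBody_subset_cylinder hT hsT
    refine ⟨R, hR, hRT, fun _ => true, fun y _ x hx => absurd ?_ hsP'⟩
    exact hQP' y (mem_of_mem_treeBody hx.2 (hRs hx.1))

end SparseSplitting

/-- there is no m₀-Luzin set. -/
theorem stmt12 :
    ∀ L : Set (ℕ → ℕ), ∃ A ∈ treeIdeal {T | IsMillerTree T},
      Cardinal.mk ↑(A ∩ L) = Cardinal.mk ↑L := by
  intro L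
  by_cases hL : L ∈ treeIdeal {T | IsMillerTree T}
  · exact ⟨L, hL, by rw [inter_self]⟩
  · obtain ⟨A, hAL, hA, hcard⟩ := hasSparseSplittings_isMillerTree.exists_subset_mk_eq_continuum hL
    refine ⟨A, hA, ?_⟩
    rw [inter_eq_left.2 hAL]
    exact (mk_le_mk_of_subset hAL).antisymm (hcard ▸ (mk_set_le L).trans (by simp))
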